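/- arXiv:2009.09604 — 3 statements merged into one kernel-verified Lean document; each statement's English description precedes it below -/
import Mathlib

section
/- Let X and M be countable sets, ε ≥ 0, δ ≥ 0, and let R map each x ∈ X to a probability distribution R(x) on M. Assume R is (ε,δ)-locally differentially private, i.e., for all x, y ∈ X and every subset E ⊆ M, R(x)(E) ≤ e^ε·R(y)(E) + δ. Then for every i, j ∈ X, the probability under z ← R(i) that R(i)(z) ≥ 2e^ε·R(j)(z) is at most 2δ; that is, Σ_{z ∈ M : R(i)(z) ≥ 2e^ε·R(j)(z)} R(i)(z) ≤ 2δ. -/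
/-!
On the event `E = {R i ≥ 2 e^ε R j}` the pointwise bound sums to `2 e^ε R j (E) ≤ R i (E)`, while
privacy gives `R i (E) ≤ e^ε R j (E) + δ`; doubling the latter leaves `R i (E) ≤ 2 δ`. A likelihood
ratio threshold `t e^ε` with `t > 1` yields `t / (t - 1) * δ` in the same way.
-/

theorem summable_of_tsum_ne_zero {ι α : Type*} [AddCommMonoid α] [TopologicalSpace α] {f : ι → α}
    (hf : ∑' i, f i ≠ 0) : Summable f :=
  not_imp_comm.1 tsum_eq_zero_of_not_summable hf

theorem mul_tsum_le_tsum {ι : Type*} {f g : ι → ℝ} {c : ℝ} (hf : Summable f) (hg : Summable g)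
    (hgf : ∀ i, c * g i ≤ f i) : c * ∑' i, g i ≤ ∑' i, f i := by
  rw [← tsum_mul_left]
  exact (hg.mul_left c).tsum_le_tsum hgf hf

theorem sub_one_mul_tsum_le_mul {ι : Type*} {f g : ι → ℝ} {c t δ : ℝ} (ht : 0 ≤ t)
    (hf : Summable f) (hg : Summable g) (hgf : ∀ i, t * c * g i ≤ f i)
    (hfg : ∑' i, f i ≤ c * ∑' i, g i + δ) : (t - 1) * ∑' i, f i ≤ t * δ := by
  have lower : t * c * ∑' i, g i ≤ ∑' i, f i := mul_tsum_le_tsum hf hg hgf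
  have upper : t * ∑' i, f i ≤ t * (c * ∑' i, g i + δ) := mul_le_mul_of_nonneg_left hfg ht
  linarith

theorem stmt_1_general {M : Type*} {f g : M → ℝ} {c t δ : ℝ} (ht : 1 < t)
    (hf : Summable f) (hg : Summable g)
    (hfg : ∑' z : {z | t * c * g z ≤ f z}, f z ≤ c * ∑' z : {z | t * c * g z ≤ f z}, g z + δ) :
    ∑' z : {z | t * c * g z ≤ f z}, f z ≤ t / (t - 1) * δ := by
  rw [div_mul_eq_mul_div, le_div_iff₀' (sub_pos.2 ht)]
  exact sub_one_mul_tsum_le_mul (zero_le_one.trans ht.le) (hf.subtype _) (hg.subtype _)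
    Subtype.property hfg

/-- for an (ε,δ)-locally DP randomizer, the probability under
`z ← R i` that `R i z ≥ 2·e^ε·R j z` is at most `2δ`. -/
theorem stmt_1 {X M : Type} [Countable X] [Countable M] (ε δ : ℝ) (hε : 0 ≤ ε) (hδ : 0 ≤ δ)
    (R : X → M → ℝ) (hRnn : ∀ x z, 0 ≤ R x z) (hRsum : ∀ x, ∑' z, R x z = 1)
    (hDP : ∀ x y : X, ∀ E : Set M,
      ∑' z : E, R x (z : M) ≤ Real.exp ε * ∑' z : E, R y (z : M) + δ) :
    ∀ i j : X,
      ∑' z : {z : M | 2 * Real.exp ε * R j z ≤ R i z}, R i (z : M) ≤ 2 * δ := by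
  have hR (x : X) : Summable (R x) := summable_of_tsum_ne_zero ((hRsum x).trans_ne one_ne_zero)
  exact fun i j ↦ (stmt_1_general one_lt_two (hR i) (hR j) (hDP i j _)).trans_eq (by norm_num)
end

section
/- Let n ≥ 1 and m be integers with 0 ≤ m ≤ n, and define f_n(m) := n·(1 − (1 − 1/n)^m). If Y₁,…,Y_m are i.i.d. uniformly random elements of [n] = {1,…,n}, then Pr[ | |{Y₁,…,Y_m}| − f_n(m) | ≥ 10·√n ] ≤ 0.01. -/
/-!
A value `a` is missed by the sample `Y` with probability `p = (1 - 1/n)^m`, and the number of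
distinct values is `n` minus the number of missed ones. Two distinct values are both missed with
probability `(1 - 2/n)^m ≤ p²`, so the indicators of being missed are pairwise nonpositively
correlated. Hence the variance of the number of missed values is at most `n p (1 - p) ≤ n / 4`, and
Chebyshev's inequality applies.
-/

open Finset
open scoped BigOperators

section UniformExpectation

variable {Ω κ 𝕜 : Type*} [Field 𝕜]

lemma expect_sub_mul_sub [CharZero 𝕜] {s : Finset Ω} (hs : s.Nonempty) (X Y : Ω → 𝕜) :
    𝔼 ω ∈ s, (X ω - 𝔼 ω' ∈ s, X ω') * (Y ω - 𝔼 ω' ∈ s, Y ω') =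
      𝔼 ω ∈ s, X ω * Y ω - (𝔼 ω ∈ s, X ω) * 𝔼 ω ∈ s, Y ω := by
  simp only [sub_mul, mul_sub, expect_sub_distrib, ← mul_expect, ← expect_mul, expect_const hs,
    sub_self, sub_zero]

variable [LinearOrder 𝕜] [IsStrictOrderedRing 𝕜]

lemma card_filter_le_abs_sub_div_card_le_expect_sq (s : Finset Ω) (X : Ω → 𝕜) (c : 𝕜) {t : 𝕜}
    (ht : 0 < t) :
    (#{ω ∈ s | t ≤ |X ω - c|} : 𝕜) / #s ≤ (𝔼 ω ∈ s, (X ω - c) ^ 2) / t ^ 2 := by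
  have sq_le_of_mem : ∀ ω ∈ ({ω ∈ s | t ≤ |X ω - c|} : Finset Ω), t ^ 2 ≤ (X ω - c) ^ 2 :=
    fun ω hω ↦ sq_le_sq.2 <| (abs_of_pos ht).trans_le (mem_filter.1 hω).2
  have markov : (#{ω ∈ s | t ≤ |X ω - c|} : 𝕜) * t ^ 2 ≤ ∑ ω ∈ s, (X ω - c) ^ 2 := by
    rw [← nsmul_eq_mul]
    exact (card_nsmul_le_sum _ _ _ sq_le_of_mem).trans <|
      sum_le_sum_of_subset_of_nonneg (filter_subset _ _) fun _ _ _ ↦ sq_nonneg _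
  rw [expect_eq_sum_div_card, div_right_comm]
  gcongr
  exact (le_div_iff₀ (by positivity)).2 markov

lemma expect_sq_sum_sub_le_sum_expect_sq (s : Finset Ω) (T : Finset κ) (X : κ → Ω → 𝕜)
    (c : κ → 𝕜)
    (hneg : (T : Set κ).Pairwise fun a b ↦ 𝔼 ω ∈ s, (X a ω - c a) * (X b ω - c b) ≤ 0) :
    𝔼 ω ∈ s, (∑ a ∈ T, X a ω - ∑ a ∈ T, c a) ^ 2 ≤ ∑ a ∈ T, 𝔼 ω ∈ s, (X a ω - c a) ^ 2 := by
  classical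
  simp only [← sum_sub_distrib, sq, sum_mul_sum, expect_sum_comm]
  refine sum_le_sum fun a ha ↦ ?_
  rw [← add_sum_erase _ _ ha]
  exact add_le_of_nonpos_right <| sum_nonpos fun b hb ↦
    hneg ha (mem_of_mem_erase hb) (ne_of_mem_erase hb).symm

end UniformExpectation

section Occupancy

variable {ι α : Type*} [Fintype ι] [DecidableEq α]

/-- The indicator of the event that no entry of the sample `Y` lies in `s`. Taking a finset rather
than a single value turns joint events into single ones, see `avoidIndicator_mul`. -/
def avoidIndicator (s : Finset α) (Y : ι → α) : ℝ :=
  if ∀ i, Y i ∉ s then 1 else 0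

lemma avoidIndicator_mul (s t : Finset α) (Y : ι → α) :
    avoidIndicator s Y * avoidIndicator t Y = avoidIndicator (s ∪ t) Y := by
  simp only [avoidIndicator, mem_union, not_or, forall_and, ite_and, ite_mul, one_mul, zero_mul]

variable [Fintype α]

lemma sum_avoidIndicator_singleton (Y : ι → α) :
    ∑ a, avoidIndicator {a} Y = (Fintype.card α : ℝ) - #(univ.image Y) := by
  have missed_eq : ({a | ∀ i, Y i ∉ ({a} : Finset α)} : Finset α) = (univ.image Y)ᶜ := by
    ext a; simp
  simp only [avoidIndicator, sum_boole, missed_eq, card_compl]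
  exact Nat.cast_sub (card_le_univ _)

variable [DecidableEq ι] [Nonempty α]

lemma expect_avoidIndicator (s : Finset α) :
    𝔼 Y : ι → α, avoidIndicator s Y = (1 - #s / (Fintype.card α : ℝ)) ^ Fintype.card ι := by
  have avoiding_eq : ({Y | ∀ i, Y i ∉ s} : Finset (ι → α)) = Fintype.piFinset fun _ ↦ sᶜ := by
    ext Y; simp
  simp only [avoidIndicator, expect_eq_sum_div_card, sum_boole, avoiding_eq,
    Fintype.card_piFinset, prod_const, card_compl, card_univ, Fintype.card_fun, Nat.cast_pow,
    Nat.cast_sub (card_le_univ s)]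
  rw [← div_pow, sub_div, div_self (by positivity)]

lemma expect_avoidIndicator_pair_le_mul {a b : α} (hab : a ≠ b) :
    𝔼 Y : ι → α, avoidIndicator {a, b} Y ≤
      (𝔼 Y : ι → α, avoidIndicator {a} Y) * 𝔼 Y : ι → α, avoidIndicator {b} Y := by
  have two_le_card : (2 : ℝ) ≤ Fintype.card α := by
    exact_mod_cast (card_pair hab).symm.trans_le (card_le_univ {a, b})
  simp only [expect_avoidIndicator, card_pair hab, card_singleton, ← mul_pow]
  push_cast
  gcongr
  · exact sub_nonneg.2 <| (div_le_one (by positivity)).2 two_le_card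
  · linear_combination sq_nonneg (1 / (Fintype.card α : ℝ))

lemma expect_sq_card_image_sub_le :
    𝔼 Y : ι → α, ((#(univ.image Y) : ℝ) -
      Fintype.card α * (1 - (1 - 1 / (Fintype.card α : ℝ)) ^ Fintype.card ι)) ^ 2 ≤
        (Fintype.card α : ℝ) / 4 := by
  set p : ℝ := (1 - 1 / (Fintype.card α : ℝ)) ^ Fintype.card ι
  have expect_eq (a : α) : 𝔼 Y : ι → α, avoidIndicator {a} Y = p := by
    rw [expect_avoidIndicator, card_singleton, Nat.cast_one]
  have cov_eq (a b : α) : 𝔼 Y : ι → α, (avoidIndicator {a} Y - p) * (avoidIndicator {b} Y - p) =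
      𝔼 Y : ι → α, avoidIndicator {a, b} Y - p * p := by
    simpa only [expect_eq, avoidIndicator_mul, singleton_union] using
      expect_sub_mul_sub univ_nonempty (avoidIndicator (ι := ι) {a}) (avoidIndicator {b})
  have cov_nonpos {a b : α} (hab : a ≠ b) :
      𝔼 Y : ι → α, (avoidIndicator {a} Y - p) * (avoidIndicator {b} Y - p) ≤ 0 := by
    simpa only [cov_eq, expect_eq, sub_nonpos] using expect_avoidIndicator_pair_le_mul (ι := ι) hab
  have variance_le (a : α) : 𝔼 Y : ι → α, (avoidIndicator {a} Y - p) ^ 2 ≤ 1 / 4 := by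
    simp only [sq, cov_eq, pair_eq_singleton, expect_eq]
    linear_combination sq_nonneg (p - 1 / 2)
  calc 𝔼 Y : ι → α, ((#(univ.image Y) : ℝ) - Fintype.card α * (1 - p)) ^ 2
      = 𝔼 Y : ι → α, (∑ a, avoidIndicator {a} Y - ∑ _a : α, p) ^ 2 := by
        simp only [sum_avoidIndicator_singleton, sum_const, card_univ, nsmul_eq_mul]
        exact expect_congr rfl fun Y _ ↦ by ring
    _ ≤ ∑ a, 𝔼 Y : ι → α, (avoidIndicator {a} Y - p) ^ 2 :=
        expect_sq_sum_sub_le_sum_expect_sq _ _ _ _ fun _ _ _ _ hab ↦ cov_nonpos hab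
    _ ≤ ∑ _a : α, 1 / 4 := sum_le_sum fun a _ ↦ variance_le a
    _ = (Fintype.card α : ℝ) / 4 := by rw [sum_const, card_univ, nsmul_eq_mul, mul_one_div]

theorem stmt_13_general {t : ℝ} (ht : 0 < t) :
    (#{Y : ι → α | t ≤ |(#(univ.image Y) : ℝ) -
      Fintype.card α * (1 - (1 - 1 / (Fintype.card α : ℝ)) ^ Fintype.card ι)|} : ℝ) /
        (Fintype.card α : ℝ) ^ Fintype.card ι ≤
      Fintype.card α / (4 * t ^ 2) := by
  have chebyshev := card_filter_le_abs_sub_div_card_le_expect_sq univ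
    (fun Y : ι → α ↦ (#(univ.image Y) : ℝ))
    (Fintype.card α * (1 - (1 - 1 / (Fintype.card α : ℝ)) ^ Fintype.card ι)) ht
  rw [card_univ, Fintype.card_fun, Nat.cast_pow] at chebyshev
  rw [← div_div]
  exact chebyshev.trans <| by gcongr; exact expect_sq_card_image_sub_le

end Occupancy

/-- concentration for the number of distinct values among `m`
i.i.d. uniform samples from `[n]` around `f_n(m) = n·(1 − (1 − 1/n)^m)`. -/
theorem stmt_13 (n m : ℕ) (hn : 1 ≤ n) (hm : m ≤ n) :
    ((Finset.univ.filter (fun Y : Fin m → Fin n =>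
        10 * Real.sqrt (n : ℝ) ≤
          |((Finset.univ.image Y).card : ℝ) -
            (n : ℝ) * (1 - (1 - 1 / (n : ℝ)) ^ m)|)).card : ℝ) /
      ((n : ℝ) ^ m) ≤ 0.01 := by
  have : NeZero n := ⟨by lia⟩
  have bound : (n : ℝ) / (4 * (10 * √n) ^ 2) ≤ 0.01 := by
    rw [mul_pow, Real.sq_sqrt n.cast_nonneg]; field_simp; norm_num
  have tail := stmt_13_general (ι := Fin m) (α := Fin n) (t := 10 * √n) (by positivity)
  simp only [Fintype.card_fin] at tail
  exact tail.trans bound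
end

section
/- Let L ≥ 1 be an integer, Λ > 0, and let U, V be Borel probability distributions on [0,Λ] with E[U^j] = E[V^j] for all j ∈ {1,…,L}. Let D ∈ ℕ and θ, λ ∈ (ℝ_{≥0})^D, and define α ∈ (ℝ_{≥0})^D coordinatewise by α_i := θ_i²/(Λ·θ_i + λ_i), with α_i := 0 when Λ·θ_i + λ_i = 0. Then ‖ E_{u←U}[Poi⃗(u·θ + λ)] − E_{v←V}[Poi⃗(v·θ + λ)] ‖²_TV ≤ Σ_{z=L+1}^∞ (Λ²·‖α‖₁)^z / z!, where ‖α‖₁ = Σ_{i=1}^D α_i. -/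
open MeasureTheory

/-- The Poisson pmf with mean `μ` at `k`. -/
noncomputable def poiP (μ : ℝ) (k : ℕ) : ℝ := Real.exp (-μ) * μ ^ k / (Nat.factorial k)

/-- The mixture over `u ← U` of the product Poisson distribution
`Poi⃗(u·θ + λ)`, as a pmf on `ℕ^D`. -/
noncomputable def poiMix {D : ℕ} (U : Measure ℝ) (θ lam : Fin D → ℝ)
    (m : Fin D → ℕ) : ℝ :=
  ∫ u, ∏ i, poiP (u * θ i + lam i) (m i) ∂U

/-!
Let `p_u` be the pmf of `Poi⃗(u·θ + λ)` and compare with the reference `q = p_c`. The χ² kernel is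
explicit, `∑ₘ p_u(m) p_v(m) / q(m) = exp (a (u - c) (v - c))` with `a = ∑ᵢ θᵢ² / (c θᵢ + λᵢ)`, and
its Taylor series is a second expansion of the same kernel, with features `(u - c)ᶻ`. Integrating
both expansions against `(U - V) ⊗ (U - V)` shows that the χ² distance of the two mixtures equals
`∑_z aᶻ / z! · (∫ (u - c)ᶻ dU - ∫ (u - c)ᶻ dV)²`. Matching moments kill the terms `z ≤ L`, the
others are at most `(2 rᶻ)²` for measures supported in the ball of radius `r` around `c`, and
Cauchy-Schwarz bounds the ℓ¹ distance by the χ² distance. The factor `(1/2)²` of the squared total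
variation distance absorbs the `2²`. The theorem is the case `c = r = Λ`.
-/

open Metric
open scoped Nat

section Series

theorem hasSum_pow_div_factorial (x : ℝ) : HasSum (fun n : ℕ => x ^ n / n !) (Real.exp x) := by
  rw [Real.exp_eq_exp_ℝ]
  exact NormedSpace.expSeries_div_hasSum_exp x

theorem hasSum_integral_count {α E : Type*} [Countable α] [MeasurableSpace α]
    [MeasurableSingletonClass α] [NormedAddCommGroup E] [NormedSpace ℝ E] [CompleteSpace E]
    {f : α → E} (hf : Integrable f Measure.count) : HasSum f (∫ x, f x ∂Measure.count) := by
  simpa [integral_countable hf] using (integrable_count_iff.1 hf).of_norm.hasSum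

-- Fubini for the counting measure: on `Π i, κ i` it is the product of the counting measures.
theorem hasSum_prod_apply {ι : Type*} [Fintype ι] {κ : ι → Type*} [∀ i, Countable (κ i)]
    {𝕜 : Type*} [RCLike 𝕜] {f : ∀ i, κ i → 𝕜} {s : ι → 𝕜} (h : ∀ i, HasSum (f i) (s i)) :
    HasSum (fun m : ∀ i, κ i => ∏ i, f i (m i)) (∏ i, s i) := by
  let (i : ι) : MeasurableSpace (κ i) := ⊤
  have hpi : Measure.pi (fun i => (Measure.count : Measure (κ i))) = Measure.count :=
    Measure.ext_of_singleton fun m => by simp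
  have hint (i : ι) : Integrable (f i) Measure.count := integrable_count_iff.2 (h i).summable.norm
  have hfactor (i : ι) : ∫ k, f i k ∂Measure.count = s i :=
    (hasSum_integral_count (hint i)).unique (h i)
  have hprod := Integrable.fintype_prod_dep hint
  rw [hpi] at hprod
  simpa only [← hpi, integral_fintype_prod_eq_prod, hfactor] using hasSum_integral_count hprod

theorem le_tsum_nat_add_of_hasSum {f g : ℕ → ℝ} {s : ℝ} {n : ℕ} (hf : HasSum f s)
    (hg : Summable g) (hzero : ∀ z < n, f z = 0) (hle : ∀ z, f z ≤ g z) :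
    s ≤ ∑' z, g (z + n) := by
  have htail := (hasSum_nat_add_iff' n).2 hf
  rw [Finset.sum_eq_zero fun z hz => hzero z (Finset.mem_range.1 hz), sub_zero] at htail
  exact hasSum_le (fun z => hle (z + n)) htail ((summable_nat_add_iff n).2 hg).hasSum

theorem sq_tsum_abs_le_mul {α : Type*} {d q : α → ℝ} {X Q : ℝ} (hq : ∀ m, 0 ≤ q m)
    (hd : ∀ m, q m = 0 → d m = 0) (hX : HasSum (fun m => (q m)⁻¹ * d m ^ 2) X)
    (hQ : HasSum q Q) : (∑' m, |d m|) ^ 2 ≤ X * Q := by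
  have hterm (m : α) : 0 ≤ (q m)⁻¹ * d m ^ 2 := mul_nonneg (inv_nonneg.2 (hq m)) (sq_nonneg _)
  have hXQ : 0 ≤ X * Q := mul_nonneg (hX.nonneg hterm) (hQ.nonneg hq)
  suffices ∑' m, |d m| ≤ √(X * Q) from
    (Real.le_sqrt (tsum_nonneg fun m => abs_nonneg (d m)) hXQ).1 this
  refine Real.tsum_le_of_sum_le (fun m => abs_nonneg _) fun F => Real.le_sqrt_of_sq_le ?_
  calc (∑ m ∈ F, |d m|) ^ 2 ≤ (∑ m ∈ F, (q m)⁻¹ * d m ^ 2) * ∑ m ∈ F, q m := by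
        refine F.sum_sq_le_sum_mul_sum_of_sq_le_mul (fun m _ => hterm m) (fun m _ => hq m)
          fun m _ => ?_
        rcases eq_or_ne (q m) 0 with hm | hm
        · simp [hm, hd m hm]
        · rw [sq_abs, mul_right_comm, inv_mul_cancel₀ hm, one_mul]
    _ ≤ X * Q := mul_le_mul (sum_le_hasSum F (fun m _ => hterm m) hX)
        (sum_le_hasSum F (fun m _ => hq m) hQ) (Finset.sum_nonneg fun m _ => hq m)
        (hX.nonneg hterm)

end Series

section Kernel

variable {Ω : Type*} [MeasurableSpace Ω]

/-- The squared maximum mean discrepancy `∬ K d(A - B) d(A - B)` of two measures with respect to a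
symmetric kernel `K`. It is written out as a combination of three integrals against product
measures, so the two cross terms are merged into one. -/
noncomputable def sqMMD (K : Ω → Ω → ℝ) (A B : Measure Ω) : ℝ :=
  ∫ x, K x.1 x.2 ∂A.prod A - 2 * ∫ x, K x.1 x.2 ∂A.prod B + ∫ x, K x.1 x.2 ∂B.prod B

variable {α : Type*} [Countable α] {w : α → ℝ} {f : α → Ω → ℝ} {K : Ω → Ω → ℝ} {S : Set Ω}
  {A B : Measure Ω} [IsFiniteMeasure A] [IsFiniteMeasure B]

-- By AM-GM the terms are dominated by the expansions of `K u u / 2 + K v v / 2`.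
theorem hasSum_integral_mul_integral (hw : ∀ m, 0 ≤ w m) (hf : ∀ m, Measurable (f m))
    (hK : ∀ u ∈ S, ∀ v ∈ S, HasSum (fun m => w m * (f m u * f m v)) (K u v))
    (hAS : ∀ᵐ u ∂A, u ∈ S) (hBS : ∀ᵐ u ∂B, u ∈ S)
    (hA : Integrable (fun u => K u u) A) (hB : Integrable (fun u => K u u) B) :
    HasSum (fun m => w m * ((∫ u, f m u ∂A) * ∫ u, f m u ∂B))
      (∫ x, K x.1 x.2 ∂A.prod B) := by
  have hS : ∀ᵐ x ∂A.prod B, x.1 ∈ S ∧ x.2 ∈ S :=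
    (Measure.quasiMeasurePreserving_fst.ae hAS).and (Measure.quasiMeasurePreserving_snd.ae hBS)
  have hbound : ∀ᵐ x ∂A.prod B,
      HasSum (fun m => w m * ((f m x.1 * f m x.1 + f m x.2 * f m x.2) / 2))
        ((K x.1 x.1 + K x.2 x.2) / 2) := by
    filter_upwards [hS] with x hx
    simpa only [mul_add, mul_div_assoc, add_div] using
      ((hK _ hx.1 _ hx.1).add (hK _ hx.2 _ hx.2)).div_const 2
  have hsum := hasSum_integral_of_dominated_convergence (μ := A.prod B)
    (F := fun m x => w m * (f m x.1 * f m x.2)) (f := fun x => K x.1 x.2)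
    (fun m x => w m * ((f m x.1 * f m x.1 + f m x.2 * f m x.2) / 2))
    (fun m => by have := hf m; fun_prop)
    (fun m => .of_forall fun x => by
      rw [Real.norm_eq_abs, abs_mul, abs_of_nonneg (hw m), abs_mul]
      gcongr
      · exact hw m
      · nlinarith [sq_nonneg (|f m x.1| - |f m x.2|), abs_mul_abs_self (f m x.1),
          abs_mul_abs_self (f m x.2)])
    (hbound.mono fun x hx => hx.summable)
    ((((hA.comp_fst B).add (hB.comp_snd A)).div_const 2).congr
      (hbound.mono fun x hx => hx.tsum_eq.symm))
    (hS.mono fun x hx => hK _ hx.1 _ hx.2)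
  simpa only [integral_const_mul, integral_prod_mul] using hsum

theorem hasSum_sqMMD (hw : ∀ m, 0 ≤ w m) (hf : ∀ m, Measurable (f m))
    (hK : ∀ u ∈ S, ∀ v ∈ S, HasSum (fun m => w m * (f m u * f m v)) (K u v))
    (hAS : ∀ᵐ u ∂A, u ∈ S) (hBS : ∀ᵐ u ∂B, u ∈ S)
    (hA : Integrable (fun u => K u u) A) (hB : Integrable (fun u => K u u) B) :
    HasSum (fun m => w m * (∫ u, f m u ∂A - ∫ u, f m u ∂B) ^ 2) (sqMMD K A B) := by
  have hAA := hasSum_integral_mul_integral hw hf hK hAS hAS hA hA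
  have hAB := hasSum_integral_mul_integral hw hf hK hAS hBS hA hB
  have hBB := hasSum_integral_mul_integral hw hf hK hBS hBS hB hB
  convert! (hAA.sub (hAB.mul_left 2)).add hBB using 2 with m
  ring

end Kernel

section Moments

theorem integrable_of_ae_mem_isCompact {X E : Type*} [TopologicalSpace X] [T2Space X]
    [MeasurableSpace X] [OpensMeasurableSpace X] [NormedAddCommGroup E]
    [SecondCountableTopologyEither X E] {μ : Measure X}
    [IsFiniteMeasureOnCompacts μ] {S : Set X} (hS : IsCompact S) (hμ : ∀ᵐ x ∂μ, x ∈ S)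
    {f : X → E} (hf : ContinuousOn f S) : Integrable f μ := by
  have := hf.integrableOn_compact (μ := μ) hS
  rwa [IntegrableOn, Measure.restrict_eq_self_of_ae_mem hμ] at this

theorem integral_eval_eq_of_integral_pow_eq {L : ℕ} {A B : Measure ℝ}
    (hA : ∀ j ≤ L, Integrable (fun u : ℝ => u ^ j) A)
    (hB : ∀ j ≤ L, Integrable (fun u : ℝ => u ^ j) B)
    (hmom : ∀ j ≤ L, ∫ u, u ^ j ∂A = ∫ u, u ^ j ∂B) {p : Polynomial ℝ} (hp : p.natDegree ≤ L) :
    ∫ u, p.eval u ∂A = ∫ u, p.eval u ∂B := by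
  have hle {j : ℕ} (hj : j ∈ Finset.range (L + 1)) : j ≤ L := Finset.mem_range_succ_iff.1 hj
  simp only [Polynomial.eval_eq_sum_range' (Nat.lt_succ_of_le hp)]
  rw [integral_finsetSum _ fun j hj => (hA j (hle hj)).const_mul _,
    integral_finsetSum _ fun j hj => (hB j (hle hj)).const_mul _]
  refine Finset.sum_congr rfl fun j hj => ?_
  rw [integral_const_mul, integral_const_mul, hmom j (hle hj)]

variable {c r : ℝ} {U V : Measure ℝ}

theorem abs_integral_sub_pow_le [IsProbabilityMeasure U] (hU : ∀ᵐ u ∂U, u ∈ closedBall c r)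
    (z : ℕ) : |∫ u, (u - c) ^ z ∂U| ≤ r ^ z := by
  have hpow : ∀ᵐ u ∂U, ‖(u - c) ^ z‖ ≤ r ^ z := by
    filter_upwards [hU] with u hu
    rw [norm_pow]
    exact pow_le_pow_left₀ (norm_nonneg _) (mem_closedBall_iff_norm.1 hu) z
  simpa using norm_integral_le_of_norm_le_const hpow

theorem hasSum_exp_mul_sub_mul_sub (a c u v : ℝ) :
    HasSum (fun z : ℕ => a ^ z / z ! * ((u - c) ^ z * (v - c) ^ z))
      (Real.exp (a * ((u - c) * (v - c)))) := by
  convert! hasSum_pow_div_factorial (a * ((u - c) * (v - c))) using 2 with z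
  rw [mul_pow, mul_pow]
  ring

theorem integrable_exp_mul_sub_mul_sub [IsFiniteMeasure U] (hU : ∀ᵐ u ∂U, u ∈ closedBall c r)
    (a : ℝ) : Integrable (fun u => Real.exp (a * ((u - c) * (u - c)))) U :=
  integrable_of_ae_mem_isCompact (isCompact_closedBall c r) hU (by fun_prop)

variable [IsProbabilityMeasure U] [IsProbabilityMeasure V]

theorem integral_sub_pow_eq_of_integral_pow_eq {L z : ℕ} (hU : ∀ᵐ u ∂U, u ∈ closedBall c r)
    (hV : ∀ᵐ v ∂V, v ∈ closedBall c r)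
    (hmom : ∀ j : ℕ, 1 ≤ j → j ≤ L → ∫ u, u ^ j ∂U = ∫ v, v ^ j ∂V) (hz : z ≤ L) :
    ∫ u, (u - c) ^ z ∂U = ∫ v, (v - c) ^ z ∂V := by
  have hmom' (j : ℕ) (hj : j ≤ L) : ∫ u, u ^ j ∂U = ∫ v, v ^ j ∂V := by
    rcases j.eq_zero_or_pos with rfl | hpos
    · simp
    · exact hmom j hpos hj
  have hdeg : ((Polynomial.X - Polynomial.C c) ^ z).natDegree ≤ L := by
    rwa [Polynomial.natDegree_pow, Polynomial.natDegree_X_sub_C, mul_one]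
  simpa using integral_eval_eq_of_integral_pow_eq
    (fun j _ => integrable_of_ae_mem_isCompact (isCompact_closedBall c r) hU (by fun_prop))
    (fun j _ => integrable_of_ae_mem_isCompact (isCompact_closedBall c r) hV (by fun_prop))
    hmom' hdeg

theorem sqMMD_exp_le {L : ℕ} (hU : ∀ᵐ u ∂U, u ∈ closedBall c r)
    (hV : ∀ᵐ v ∂V, v ∈ closedBall c r)
    (hmom : ∀ j : ℕ, 1 ≤ j → j ≤ L → ∫ u, u ^ j ∂U = ∫ v, v ^ j ∂V) {a : ℝ} (ha : 0 ≤ a) :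
    sqMMD (fun u v => Real.exp (a * ((u - c) * (v - c)))) U V
      ≤ 4 * ∑' z : ℕ, (r ^ 2 * a) ^ (z + (L + 1)) / (z + (L + 1))! := by
  have hsum := hasSum_sqMMD (S := closedBall c r) (fun z => by positivity) (fun z => by fun_prop)
    (fun u _ v _ => hasSum_exp_mul_sub_mul_sub a c u v) hU hV
    (integrable_exp_mul_sub_mul_sub hU a) (integrable_exp_mul_sub_mul_sub hV a)
  rw [← tsum_mul_left]
  refine le_tsum_nat_add_of_hasSum hsum ((hasSum_pow_div_factorial (r ^ 2 * a)).summable.mul_left 4)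
    (fun z hz => ?_) (fun z => ?_)
  · simp [integral_sub_pow_eq_of_integral_pow_eq hU hV hmom (Nat.le_of_lt_succ hz)]
  · have hdiff : |∫ u, (u - c) ^ z ∂U - ∫ v, (v - c) ^ z ∂V| ≤ 2 * r ^ z :=
      (abs_sub _ _).trans <| by
        linarith [abs_integral_sub_pow_le hU z, abs_integral_sub_pow_le hV z]
    calc a ^ z / z ! * (∫ u, (u - c) ^ z ∂U - ∫ v, (v - c) ^ z ∂V) ^ 2
        ≤ a ^ z / z ! * (2 * r ^ z) ^ 2 := by
          gcongr ?_ * ?_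
          exact sq_le_sq.2 (hdiff.trans (le_abs_self _))
      _ = 4 * ((r ^ 2 * a) ^ z / z !) := by ring

end Moments

section Poisson

theorem poiP_nonneg {μ : ℝ} (hμ : 0 ≤ μ) (k : ℕ) : 0 ≤ poiP μ k := by
  unfold poiP
  positivity

theorem hasSum_poiP_inv_mul_mul {x y b : ℝ} (hx : b = 0 → x = 0) (hy : b = 0 → y = 0) :
    HasSum (fun k => (poiP b k)⁻¹ * (poiP x k * poiP y k))
      (Real.exp ((x - b) * (y - b) / b)) := by
  rcases eq_or_ne b 0 with rfl | hb
  · convert! hasSum_ite_eq (0 : ℕ) (1 : ℝ) using 2 with k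
    · rcases eq_or_ne k 0 with rfl | hk
      · simp [poiP, hx rfl, hy rfl]
      · simp [poiP, hk]
    · simp
  · convert! (hasSum_pow_div_factorial (x * y / b)).mul_left (Real.exp (b - x - y)) using 1
    · funext k
      have hexp : Real.exp (b - x - y) = Real.exp (-x) * Real.exp (-y) / Real.exp (-b) := by
        rw [← Real.exp_add, ← Real.exp_sub]
        ring_nf
      rw [hexp, div_pow, mul_pow]
      unfold poiP
      field_simp
    · rw [← Real.exp_add]
      congr 1
      field_simp
      ring

variable {ι : Type*} {c r : ℝ} {θ lam : ι → ℝ}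

-- The mean at the centre is the average of the means at `u` and at its reflection `2 c - u`.
theorem affine_eq_zero_of_nonneg_on_closedBall {u : ℝ}
    (hpos : ∀ u ∈ closedBall c r, 0 ≤ u • θ + lam) (hu : u ∈ closedBall c r) {i : ι}
    (hc : (c • θ + lam) i = 0) : (u • θ + lam) i = 0 := by
  have hrefl : 2 * c - u ∈ closedBall c r := by
    rw [mem_closedBall_iff_norm'] at hu ⊢
    convert! hu using 1
    rw [← norm_neg]
    ring_nf
  have h₁ := hpos u hu i
  have h₂ := hpos _ hrefl i
  simp only [Pi.zero_apply, Pi.add_apply, Pi.smul_apply, smul_eq_mul] at h₁ h₂ hc ⊢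
  linarith

variable [Fintype ι]

/-- The pmf on `ι → ℕ` of the product Poisson distribution with mean vector `μ`. -/
noncomputable def poissonProd (μ : ι → ℝ) (m : ι → ℕ) : ℝ := ∏ i, poiP (μ i) (m i)

theorem poissonProd_nonneg {μ : ι → ℝ} (hμ : 0 ≤ μ) (m : ι → ℕ) : 0 ≤ poissonProd μ m :=
  Finset.prod_nonneg fun i _ => poiP_nonneg (hμ i) (m i)

theorem continuous_poissonProd (m : ι → ℕ) : Continuous fun μ : ι → ℝ => poissonProd μ m := by
  unfold poissonProd poiP
  fun_prop

theorem hasSum_poissonProd (μ : ι → ℝ) : HasSum (poissonProd μ) 1 := by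
  have hpoi (i : ι) : HasSum (poiP (μ i)) 1 := by
    convert! (hasSum_pow_div_factorial (μ i)).mul_left (Real.exp (-μ i)) using 2 with k
    · exact mul_div_assoc _ _ _
    · rw [← Real.exp_add, neg_add_cancel, Real.exp_zero]
  simpa using! hasSum_prod_apply hpoi

theorem poissonProd_eq_zero_of_eq_zero {μ b : ι → ℝ} (hμ : ∀ i, b i = 0 → μ i = 0) {m : ι → ℕ}
    (hm : poissonProd b m = 0) : poissonProd μ m = 0 := by
  obtain ⟨i, -, hi⟩ := Finset.prod_eq_zero_iff.1 hm
  obtain ⟨hbi, hmi⟩ : b i = 0 ∧ m i ≠ 0 := by simpa [poiP, Nat.factorial_ne_zero] using hi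
  exact Finset.prod_eq_zero (Finset.mem_univ i) (by simp [poiP, hμ i hbi, hmi])

theorem hasSum_poissonProd_inv_mul_mul {μ ν b : ι → ℝ} (hμ : ∀ i, b i = 0 → μ i = 0)
    (hν : ∀ i, b i = 0 → ν i = 0) :
    HasSum (fun m => (poissonProd b m)⁻¹ * (poissonProd μ m * poissonProd ν m))
      (Real.exp (∑ i, (μ i - b i) * (ν i - b i) / b i)) := by
  rw [Real.exp_sum]
  convert! hasSum_prod_apply fun i => hasSum_poiP_inv_mul_mul (hμ i) (hν i) using 2 with m
  simp only [poissonProd, Finset.prod_mul_distrib, Finset.prod_inv_distrib]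

theorem hasSum_poissonProd_affine {u v : ℝ} (hpos : ∀ u ∈ closedBall c r, 0 ≤ u • θ + lam)
    (hu : u ∈ closedBall c r) (hv : v ∈ closedBall c r) :
    HasSum (fun m => (poissonProd (c • θ + lam) m)⁻¹ *
        (poissonProd (u • θ + lam) m * poissonProd (v • θ + lam) m))
      (Real.exp ((∑ i, θ i ^ 2 / (c * θ i + lam i)) * ((u - c) * (v - c)))) := by
  convert! hasSum_poissonProd_inv_mul_mul (μ := u • θ + lam) (ν := v • θ + lam) (b := c • θ + lam)
    (fun _ => affine_eq_zero_of_nonneg_on_closedBall hpos hu)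
    (fun _ => affine_eq_zero_of_nonneg_on_closedBall hpos hv) using 2
  rw [Finset.sum_mul]
  refine Finset.sum_congr rfl fun i _ => ?_
  simp only [Pi.add_apply, Pi.smul_apply, smul_eq_mul]
  ring

variable {U V : Measure ℝ} [IsProbabilityMeasure U] [IsProbabilityMeasure V]

theorem sq_tsum_abs_integral_poissonProd_sub_le (hr : 0 ≤ r)
    (hU : ∀ᵐ u ∂U, u ∈ closedBall c r) (hV : ∀ᵐ v ∂V, v ∈ closedBall c r)
    (hpos : ∀ u ∈ closedBall c r, 0 ≤ u • θ + lam) :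
    (∑' m, |∫ u, poissonProd (u • θ + lam) m ∂U - ∫ v, poissonProd (v • θ + lam) m ∂V|) ^ 2
      ≤ sqMMD (fun u v => Real.exp ((∑ i, θ i ^ 2 / (c * θ i + lam i)) * ((u - c) * (v - c))))
          U V := by
  have hnonneg := poissonProd_nonneg (hpos c (mem_closedBall_self hr))
  have hmeas (m : ι → ℕ) : Measurable fun u : ℝ => poissonProd (u • θ + lam) m :=
    ((continuous_poissonProd m).comp' (by fun_prop)).measurable
  have hchi := hasSum_sqMMD (fun m => inv_nonneg.2 (hnonneg m)) hmeas
    (fun u hu v hv => hasSum_poissonProd_affine hpos hu hv) hU hV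
    (integrable_exp_mul_sub_mul_sub hU _) (integrable_exp_mul_sub_mul_sub hV _)
  have hvanish {A : Measure ℝ} (hA : ∀ᵐ u ∂A, u ∈ closedBall c r) {m : ι → ℕ}
      (hm : poissonProd (c • θ + lam) m = 0) : ∫ u, poissonProd (u • θ + lam) m ∂A = 0 :=
    integral_eq_zero_of_ae <| hA.mono fun u hu => poissonProd_eq_zero_of_eq_zero
      (fun _ => affine_eq_zero_of_nonneg_on_closedBall hpos hu) hm
  simpa using sq_tsum_abs_le_mul hnonneg
    (fun m hm => by rw [hvanish hU hm, hvanish hV hm, sub_zero]) hchi (hasSum_poissonProd _)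

end Poisson

theorem stmt_16_general {ι : Type*} [Fintype ι] (L : ℕ) {c r : ℝ} (U V : Measure ℝ)
    [IsProbabilityMeasure U] [IsProbabilityMeasure V]
    (hU : ∀ᵐ u ∂U, u ∈ closedBall c r) (hV : ∀ᵐ v ∂V, v ∈ closedBall c r)
    (hmom : ∀ j : ℕ, 1 ≤ j → j ≤ L → ∫ u, u ^ j ∂U = ∫ v, v ^ j ∂V)
    (θ lam : ι → ℝ) (hpos : ∀ u ∈ closedBall c r, 0 ≤ u • θ + lam) :
    ((1 / 2) * ∑' m : ι → ℕ,
        |∫ u, poissonProd (u • θ + lam) m ∂U - ∫ v, poissonProd (v • θ + lam) m ∂V|) ^ 2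
      ≤ ∑' z : ℕ, (r ^ 2 * ∑ i, θ i ^ 2 / (c * θ i + lam i)) ^ (z + L + 1) / (z + L + 1)! := by
  obtain ⟨u, hu⟩ := hU.exists
  have hr : 0 ≤ r := nonneg_of_mem_closedBall hu
  have ha : 0 ≤ ∑ i, θ i ^ 2 / (c * θ i + lam i) :=
    Finset.sum_nonneg fun i _ => div_nonneg (sq_nonneg _) (hpos c (mem_closedBall_self hr) i)
  have hchi := sq_tsum_abs_integral_poissonProd_sub_le hr hU hV hpos
  have htail := sqMMD_exp_le hU hV hmom ha
  simp only [← add_assoc] at htail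
  rw [mul_pow]
  linarith

/-- moment-matching bound with `α_i = θ_i²/(Λθ_i + λ_i)`
(interpreted as `0` when the denominator vanishes, which is Lean's convention
for division by zero). -/
theorem stmt_16 (L : ℕ) (hL : 1 ≤ L) (Λ : ℝ) (hΛ : 0 < Λ)
    (U V : Measure ℝ) [IsProbabilityMeasure U] [IsProbabilityMeasure V]
    (hUsupp : U (Set.Icc 0 Λ) = 1) (hVsupp : V (Set.Icc 0 Λ) = 1)
    (hmom : ∀ j : ℕ, 1 ≤ j → j ≤ L → ∫ u, u ^ j ∂U = ∫ v, v ^ j ∂V)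
    (D : ℕ) (θ lam : Fin D → ℝ) (hθ : ∀ i, 0 ≤ θ i) (hlam : ∀ i, 0 ≤ lam i) :
    ((1 / 2) * ∑' m : Fin D → ℕ, |poiMix U θ lam m - poiMix V θ lam m|) ^ 2
      ≤ ∑' z : ℕ, (Λ ^ 2 * ∑ i, θ i ^ 2 / (Λ * θ i + lam i)) ^ (z + L + 1) /
          (Nat.factorial (z + L + 1) : ℝ) := by
  have hball : closedBall Λ Λ = Set.Icc 0 (Λ + Λ) := by rw [Real.closedBall_eq_Icc, sub_self]
  have hmem {A : Measure ℝ} [IsProbabilityMeasure A] (hA : A (Set.Icc 0 Λ) = 1) :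
      ∀ᵐ u ∂A, u ∈ closedBall Λ Λ := by
    filter_upwards [(mem_ae_iff_prob_eq_one measurableSet_Icc).2 hA] with u hu
    exact hball ▸ Set.Icc_subset_Icc_right (by linarith) hu
  exact stmt_16_general L U V (hmem hUsupp) (hmem hVsupp) hmom θ lam fun u hu i =>
    add_nonneg (mul_nonneg (hball ▸ hu).1 (hθ i)) (hlam i)
end
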